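/- arXiv:1804.02785 — 2 statements merged into one kernel-verified Lean document; each statement's English description precedes it below -/
import Mathlib

section
/- Let S_n be the star with central vertex r and leaves V' (|V'| = n), and let 𝒫 = {p_1,…,p_t} be a set of vertex-disjoint simple paths contained in V' that together cover all of V', where p_i has l_i ≥ 0 edges (so Σ_{i=1}^t (l_i + 1) = n). Then T(S_n + 𝒫) = ∏_{i=1}^{t} T(F_{l_i+1}) = ∏_{i=1}^{t} (1/√5) · ( ((3+√5)/2)^{l_i+1} − ((3−√5)/2)^{l_i+1} ), where S_n + 𝒫 is the unweighted graph obtained by adding all edges of the paths in 𝒫 to S_n. -/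
open Matrix

/-- The Laplacian matrix of a weighted graph given by a weight function. -/
def lapG {V : Type*} [Fintype V] [DecidableEq V] (W : V → V → ℝ) : Matrix V V ℝ :=
  fun i j => if i = j then ∑ k, W i k else -(W i j)

/-- The (weighted) number of spanning trees: determinant of the Laplacian with the
row and column of the last vertex removed. -/
def nst {n : ℕ} (W : Fin (n + 1) → Fin (n + 1) → ℝ) : ℝ :=
  ((lapG W).submatrix Fin.castSucc Fin.castSucc).det

/-- The star graph `S_n`: the central vertex is `Fin.last n`, joined to the `n`
leaves `0, …, n-1` by unit-weight edges. -/
def starW (n : ℕ) : Fin (n + 1) → Fin (n + 1) → ℝ :=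
  fun i j => if i ≠ j ∧ (i = Fin.last n ∨ j = Fin.last n) then 1 else 0

/-- The fan graph `F_n`: the star `S_n` plus a path of `n - 1` unit-weight edges
through the `n` leaves. -/
def fanW (n : ℕ) : Fin (n + 1) → Fin (n + 1) → ℝ :=
  fun i j => starW n i j +
    if ((i : ℕ) + 1 = (j : ℕ) ∧ j ≠ Fin.last n) ∨
       ((j : ℕ) + 1 = (i : ℕ) ∧ i ≠ Fin.last n) then 1 else 0

/-- The star `S_n` plus, for each list `l ∈ Ps` of leaves, the path consisting of
unit-weight edges between consecutive vertices of `l`. -/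
def starPlusPaths (n : ℕ) (Ps : List (List (Fin n))) : Fin (n + 1) → Fin (n + 1) → ℝ :=
  fun i j => starW n i j +
    if ∃ a b : Fin n, i = a.castSucc ∧ j = b.castSucc ∧
        ∃ l ∈ Ps, ((a, b) ∈ l.zip l.tail ∨ (b, a) ∈ l.zip l.tail) then 1 else 0

noncomputable def redL {V : Type*} [Fintype V] [DecidableEq V] (R : V → V → Prop) : Matrix V V ℝ := by
  classical
  exact fun i j => if i = j then 1 + ∑ k, (if R i k then (1:ℝ) else 0) else
    -(if R i j then 1 else 0)

lemma redL_reindex {V W : Type*} [Fintype V] [DecidableEq V] [Fintype W] [DecidableEq W]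
    (e : W ≃ V) (R : V → V → Prop) :
    (redL R).det = (redL (fun a b => R (e a) (e b))).det := by
  classical
  rw [← Matrix.det_submatrix_equiv_self e]
  congr 1
  ext i j
  simp only [redL, Matrix.submatrix_apply, EmbeddingLike.apply_eq_iff_eq]
  rw [← e.sum_comp]

lemma redL_sigma {ι : Type*} [Fintype ι] [LinearOrder ι] (β : ι → Type*)
    [∀ i, Fintype (β i)] [∀ i, DecidableEq (β i)] (R : ∀ i, β i → β i → Prop)
    (S : (Σ i, β i) → (Σ i, β i) → Prop)
    (h1 : ∀ i a b, S ⟨i, a⟩ ⟨i, b⟩ ↔ R i a b)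
    (h2 : ∀ i j a b, i ≠ j → ¬ S ⟨i, a⟩ ⟨j, b⟩) :
    (redL S).det = ∏ i, (redL (R i)).det := by
  classical
  have hb : (redL S).BlockTriangular Sigma.fst := by
    rintro ⟨i, a⟩ ⟨j, b⟩ hij
    have hij : i ≠ j := fun h => by subst h; exact lt_irrefl _ hij
    simp [redL, h2 i j a b hij, hij]
  rw [hb.det_fintype]
  refine Finset.prod_congr rfl fun i _ => ?_
  let e : β i ≃ {s : (Σ i, β i) // s.1 = i} := (Equiv.sigmaSubtype i).symm
  rw [← Matrix.det_submatrix_equiv_self e]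
  congr 1
  ext a b
  have he : ∀ a, (e a).1 = ⟨i, a⟩ := fun a => rfl
  simp only [Matrix.submatrix_apply, Matrix.toSquareBlock_def, Matrix.of_apply, he]
  simp only [redL, h1, Fintype.sum_sigma]
  rw [Finset.sum_eq_single i]
  · simp [h1]
  · intro k _ hk
    simp [h2 i k a _ hk.symm]
  · simp

lemma nst_paths (n : ℕ) (Ps : List (List (Fin n))) :
    nst (starPlusPaths n Ps) = (redL (fun a b : Fin n =>
      ∃ l ∈ Ps, ((a, b) ∈ l.zip l.tail ∨ (b, a) ∈ l.zip l.tail))).det := by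
  classical
  unfold nst
  congr 1
  ext i j
  have hl : ∀ k : Fin n, Fin.last n ≠ k.castSucc := fun k => (Fin.castSucc_lt_last k).ne'
  simp [lapG, redL, starPlusPaths, Fin.sum_univ_castSucc, starW, hl, add_comm, -Finset.sum_boole]
  congr
  ext x
  congr

lemma nst_fan (n : ℕ) :
    nst (fanW n) = (redL (fun a b : Fin n => (a : ℕ) + 1 = b ∨ (b : ℕ) + 1 = a)).det := by
  classical
  unfold nst
  congr 1
  ext i j
  have hl : ∀ k : Fin n, Fin.last n ≠ k.castSucc := fun k => (Fin.castSucc_lt_last k).ne'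
  have : ∀ k : Fin n, n + 1 ≠ (k:ℕ) := fun k => by omega
  simp [lapG, redL, fanW, Fin.sum_univ_castSucc, starW, this, add_comm, -Finset.sum_boole]
  congr
  ext x
  congr

def triK (d : ℕ → ℝ) (m : ℕ) : Matrix (Fin m) (Fin m) ℝ :=
  fun i j => if (i:ℕ) = j then d i else if (i:ℕ) + 1 = j ∨ (j:ℕ) + 1 = i then -1 else 0

lemma triK_rec (d : ℕ → ℝ) (m : ℕ) :
    (triK d (m+2)).det = d (m+1) * (triK d (m+1)).det - (triK d m).det := by
  rw [Matrix.det_succ_row _ (Fin.last (m+1)), Fin.sum_univ_castSucc, Fin.sum_univ_castSucc]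
  have hz : ∀ x : Fin m, triK d (m+2) (Fin.last (m+1)) x.castSucc.castSucc = 0 := by
    intro x
    simp only [triK, Fin.val_last, Fin.val_castSucc]
    rw [if_neg (by omega), if_neg (by omega)]
  have h1 : triK d (m+2) (Fin.last (m+1)) (Fin.last m).castSucc = -1 := by
    simp [triK]
  have h2 : triK d (m+2) (Fin.last (m+1)) (Fin.last (m+1)) = d (m+1) := by
    simp [triK]
  have s2 : (triK d (m+2)).submatrix (Fin.last (m+1)).succAbove (Fin.last (m+1)).succAbove
      = triK d (m+1) := by
    ext i j; simp [triK]
  have s1 : ((triK d (m+2)).submatrix (Fin.last (m+1)).succAbove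
      (Fin.last m).castSucc.succAbove).det = -(triK d m).det := by
    rw [Matrix.det_succ_column _ (Fin.last m), Fin.sum_univ_castSucc]
    have hz : ∀ x : Fin m, ((triK d (m+2)).submatrix (Fin.last (m+1)).succAbove
      (Fin.last m).castSucc.succAbove) x.castSucc (Fin.last m) = 0 := by
      intro x
      simp only [triK, Matrix.submatrix_apply, Fin.succAbove_last, Fin.val_castSucc,
        Fin.succAbove_castSucc_self, Fin.succ_last, Fin.val_last]
      rw [if_neg (by omega), if_neg (by omega)]
    have h1 : ((triK d (m+2)).submatrix (Fin.last (m+1)).succAbove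
      (Fin.last m).castSucc.succAbove) (Fin.last m) (Fin.last m) = -1 := by
      simp [triK]
    have s : (((triK d (m+2)).submatrix (Fin.last (m+1)).succAbove
      (Fin.last m).castSucc.succAbove).submatrix (Fin.last m).succAbove (Fin.last m).succAbove)
       = triK d m := by
      ext i j
      have : (Fin.last m).castSucc.succAbove j.castSucc = j.castSucc.castSucc :=
        Fin.succAbove_of_castSucc_lt _ _ (by simp [Fin.lt_def])
      simp [triK, this]
    rw [h1, s]
    simp only [hz]
    simp
  rw [h1, h2, s2, s1]
  simp only [hz]
  simp
  ring_nf

lemma triK_congr (d d' : ℕ → ℝ) (m : ℕ) (h : ∀ i < m, d i = d' i) : triK d m = triK d' m := by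
  ext i j
  simp [triK, h i i.2]

lemma fan_eq_triK (m : ℕ) :
    redL (fun a b : Fin m => (a : ℕ) + 1 = b ∨ (b : ℕ) + 1 = a) =
    triK (fun i => 1 + (if 0 < i then 1 else 0) + (if i + 1 < m then 1 else 0)) m := by
  classical
  ext i j
  simp only [redL, triK, Fin.ext_iff]
  by_cases h : (i : ℕ) = j
  · rw [if_pos h, if_pos h]
    refine Eq.trans (congrArg (1 + ·) (Finset.sum_congr (g := fun k : Fin m =>
      (if (k:ℕ) + 1 = i then (1:ℝ) else 0) + (if (i:ℕ) + 1 = k then 1 else 0)) rfl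
      fun k _ => ?_)) ?_
    · split_ifs <;> first | omega | simp
    simp only [Finset.sum_add_distrib]
    rw [← add_assoc]
    congr 1
    · congr 1
      split_ifs with h0
      · rw [Finset.sum_eq_single (⟨i - 1, by omega⟩ : Fin m)]
        · rw [if_pos]; simp; omega
        · intro b _ hb
          rw [if_neg]
          intro h; apply hb; ext; simp; omega
        · simp
      · apply Finset.sum_eq_zero
        intro k _
        rw [if_neg (by omega)]
    · split_ifs with h0
      · rw [Finset.sum_eq_single (⟨i + 1, by omega⟩ : Fin m)]
        · simp
        · intro b _ hb
          rw [if_neg]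
          intro h; apply hb; ext; simp; omega
        · simp
      · apply Finset.sum_eq_zero
        intro k _
        rw [if_neg (by omega)]
  · rw [if_neg h, if_neg h]
    split_ifs <;> simp

lemma fan_closed (m : ℕ) (hm : 0 < m) : nst (fanW m) = (1 / Real.sqrt 5) *
          (((3 + Real.sqrt 5) / 2) ^ m - ((3 - Real.sqrt 5) / 2) ^ m) := by
  rw [nst_fan, fan_eq_triK]
  have h5 : Real.sqrt 5 ^ 2 = 5 := Real.sq_sqrt (by norm_num)
  have h0 : Real.sqrt 5 ≠ 0 := by positivity
  set s := Real.sqrt 5 with hs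
  set p := (3 + s) / 2 with hp
  set q := (3 - s) / 2 with hq
  have hp2 : p ^ 2 = 3 * p - 1 := by rw [hp]; linear_combination h5 / 4
  have hq2 : q ^ 2 = 3 * q - 1 := by rw [hq]; linear_combination h5 / 4
  have hpq : p - q = s := by rw [hp, hq]; ring
  set d : ℕ → ℝ := fun i => if i = 0 then 2 else 3 with hd
  -- closed form of the continuants
  have key : ∀ k, (triK d k).det = (1 / s) * ((p ^ (k+1) - q ^ (k+1)) - (p ^ k - q ^ k)) ∧
      (triK d (k+1)).det = (1 / s) * ((p ^ (k+2) - q ^ (k+2)) - (p ^ (k+1) - q ^ (k+1))) := by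
    intro k
    induction k with
    | zero =>
      refine ⟨?_, ?_⟩
      · simp [hpq, h0]
      · rw [show (triK _ (0 + 1)).det = _ from Matrix.det_fin_one _]
        simp only [triK, hd]
        rw [hp2, hq2]
        have : p = q + s := by linarith
        rw [this]
        field_simp
        simp
        ring
    | succ k ih =>
      refine ⟨ih.2, ?_⟩
      rw [triK_rec, ih.1, ih.2]
      have : d (k+1) = 3 := by simp [hd]
      rw [this]
      linear_combination (1 / s) * (-(p ^ (k+1) - p ^ k) * hp2 + (q ^ (k+1) - q ^ k) * hq2)
  obtain _ | _ | m := m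
  · omega
  · rw [show (triK _ (0 + 1)).det = _ from Matrix.det_fin_one _]
    simp [triK, hpq, h0]
  · rw [triK_rec, triK_congr _ d (m+1), triK_congr _ d m, (key m).1, (key m).2]
    · simp
      linear_combination (1 / s) * (p ^ m * hp2 - q ^ m * hq2)
    · intro i hi
      rcases Nat.eq_zero_or_pos i with rfl | h
      · simp [hd]; norm_num
      · rw [if_pos h, if_pos (by omega)]; simp [hd, h.ne']; norm_num
    · intro i hi
      rcases Nat.eq_zero_or_pos i with rfl | h
      · simp [hd]; norm_num
      · rw [if_pos h, if_pos (by omega)]; simp [hd, h.ne']; norm_num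

lemma mem_zip_tail {α : Type*} (l : List α) (hl : l.Nodup) (i j : Fin l.length) :
    (l.get i, l.get j) ∈ l.zip l.tail ↔ (i : ℕ) + 1 = j := by
  rw [List.mem_iff_getElem]
  constructor
  · rintro ⟨k, hk, h⟩
    have hk' : k + 1 < l.length := by
      simp at hk; omega
    simp only [List.getElem_zip, List.getElem_tail, Prod.mk.injEq, List.get_eq_getElem] at h
    have h1 := (List.Nodup.getElem_inj_iff hl).1 h.1
    have h2 := (List.Nodup.getElem_inj_iff hl).1 h.2
    omega
  · intro h
    refine ⟨i, by simp; omega, ?_⟩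
    simp [List.getElem_zip, List.getElem_tail, h]

lemma nst_paths_prod (n : ℕ) (Ps : List (List (Fin n)))
    (hnodup : ∀ l ∈ Ps, l.Nodup)
    (hdisj : Ps.Pairwise (fun l₁ l₂ => ∀ x ∈ l₁, x ∉ l₂))
    (hcover : ∀ v : Fin n, ∃ l ∈ Ps, v ∈ l) :
    nst (starPlusPaths n Ps) = (Ps.map (fun l => nst (fanW l.length))).prod := by
  classical
  have huniq : ∀ (i j : Fin Ps.length) (x : Fin n), x ∈ Ps.get i → x ∈ Ps.get j → i = j := by
    intro i j x hi hj
    rw [List.pairwise_iff_get] at hdisj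
    rcases lt_trichotomy i j with h | h | h
    · exact absurd hj (hdisj i j h x hi)
    · exact h
    · exact absurd hi (hdisj j i h x hj)
  let f : (Σ i : Fin Ps.length, Fin (Ps.get i).length) → Fin n := fun x => (Ps.get x.1).get x.2
  have hf : Function.Bijective f := by
    constructor
    · rintro ⟨i, a⟩ ⟨j, b⟩ h
      have hij : i = j := huniq i j _ (List.get_mem _ a) (by
        have : (Ps.get i).get a = (Ps.get j).get b := h
        rw [this]; exact List.get_mem _ b)
      subst hij
      have := (List.nodup_iff_injective_get.1 (hnodup _ (List.get_mem Ps i))) h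
      exact congrArg (Sigma.mk i) this
    · intro v
      obtain ⟨l, hl, hv⟩ := hcover v
      obtain ⟨i, rfl⟩ := List.mem_iff_get.1 hl
      obtain ⟨a, rfl⟩ := List.mem_iff_get.1 hv
      exact ⟨⟨i, a⟩, rfl⟩
  rw [nst_paths, redL_reindex (Equiv.ofBijective f hf),
    redL_sigma (fun i : Fin Ps.length => Fin (Ps.get i).length)
      (fun i a b => (a : ℕ) + 1 = b ∨ (b : ℕ) + 1 = a)]
  · simp only [← nst_fan]
    exact Fin.prod_univ_fun_getElem Ps (fun l => nst (fanW l.length))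
  · intro i a b
    simp only [Equiv.ofBijective_apply, f]
    have hi := hnodup _ (List.get_mem Ps i)
    rw [← mem_zip_tail _ hi, ← mem_zip_tail _ hi]
    constructor
    · rintro ⟨l, hl, h⟩
      obtain ⟨j, rfl⟩ := List.mem_iff_get.1 hl
      have : j = i := by
        refine huniq j i ((Ps.get i).get a) ?_ (List.get_mem _ a)
        rcases h with h | h
        · exact (List.of_mem_zip h).1
        · exact List.mem_of_mem_tail (List.of_mem_zip h).2
      subst this
      exact h
    · intro h
      exact ⟨_, List.get_mem Ps i, h⟩
  · rintro i j a b hij ⟨l, hl, h⟩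
    simp only [Equiv.ofBijective_apply, f] at h
    obtain ⟨k, rfl⟩ := List.mem_iff_get.1 hl
    have : (Ps.get i).get a ∈ Ps.get k ∧ (Ps.get j).get b ∈ Ps.get k := by
      rcases h with h | h
      · exact ⟨(List.of_mem_zip h).1, List.mem_of_mem_tail (List.of_mem_zip h).2⟩
      · exact ⟨List.mem_of_mem_tail (List.of_mem_zip h).2, (List.of_mem_zip h).1⟩
    exact hij ((huniq i k _ (List.get_mem _ a) this.1).trans
      (huniq j k _ (List.get_mem _ b) this.2).symm)

theorem stmt6 (n : ℕ) (Ps : List (List (Fin n)))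
    (hne : ∀ l ∈ Ps, l ≠ []) (hnodup : ∀ l ∈ Ps, l.Nodup)
    (hdisj : Ps.Pairwise (fun l₁ l₂ => ∀ x ∈ l₁, x ∉ l₂))
    (hcover : ∀ v : Fin n, ∃ l ∈ Ps, v ∈ l) :
    nst (starPlusPaths n Ps) = (Ps.map (fun l => nst (fanW l.length))).prod ∧
      nst (starPlusPaths n Ps) =
        (Ps.map (fun l => (1 / Real.sqrt 5) *
          (((3 + Real.sqrt 5) / 2) ^ l.length -
            ((3 - Real.sqrt 5) / 2) ^ l.length))).prod := by
  have h := nst_paths_prod n Ps hnodup hdisj hcover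
  refine ⟨h, h.trans ?_⟩
  congr 1
  apply List.map_congr_left
  intro l hl
  exact fan_closed _ (List.length_pos_of_ne_nil (hne l hl))
end

section
/- Let H = (V, E) be an unweighted graph equal to a star S_n (with n leaves V') plus a subgraph H[V'] = (V', E') supported on the leaves, with n ≥ 2. For any edge set P ⊆ E' with |P| = n − 1 such that P does not form a Hamiltonian path on V', it holds that T(S_n + P) < T(F_n), where F_n = S_n plus a Hamiltonian path on V'. -/
open Matrix

/-- The star `S_n` plus the set `P` of unit-weight edges between leaves. -/
def starPlusEdges (n : ℕ) (P : Finset (Sym2 (Fin n))) : Fin (n + 1) → Fin (n + 1) → ℝ :=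
  fun i j => starW n i j +
    if ∃ a b : Fin n, i = a.castSucc ∧ j = b.castSucc ∧ s(a, b) ∈ P then 1 else 0

/-- `P` is (exactly) the edge set of a Hamiltonian path on the `n` leaves. -/
def IsHamPathEdges (n : ℕ) (P : Finset (Sym2 (Fin n))) : Prop :=
  ∃ l : List (Fin n), l.Nodup ∧ (∀ v : Fin n, v ∈ l) ∧
    ∀ e, e ∈ P ↔ ∃ p ∈ l.zip l.tail, e = s(p.1, p.2)

set_option linter.unusedSectionVars false

open Classical in
noncomputable def aj {V : Type} (G : SimpleGraph V) (i j : V) : ℝ := if G.Adj i j then 1 else 0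

noncomputable def dg {V : Type} [Fintype V] (G : SimpleGraph V) (i : V) : ℝ := ∑ j, aj G i j

noncomputable def MX {V : Type} [Fintype V] [DecidableEq V] (G : SimpleGraph V) : Matrix V V ℝ :=
  fun i j => (if i = j then 1 + dg G i else 0) - aj G i j

noncomputable def ff {V : Type} [Fintype V] [DecidableEq V] (G : SimpleGraph V) : ℝ := (MX G).det

noncomputable def hh {V : Type} [Fintype V] [DecidableEq V] (G : SimpleGraph V) (u : V) : ℝ :=
  ff G * (MX G)⁻¹ u u

section basics
variable {V : Type} [Fintype V] [DecidableEq V] (G : SimpleGraph V)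

lemma aj_comm (i j : V) : aj G i j = aj G j i := by
  by_cases h : G.Adj i j
  · simp [aj, h, h.symm]
  · have h' : ¬ G.Adj j i := fun h' => h h'.symm
    simp [aj, h, h']

lemma aj_nonneg (i j : V) : 0 ≤ aj G i j := by
  unfold aj; split_ifs <;> norm_num

lemma aj_self (i : V) : aj G i i = 0 := by simp [aj]

lemma aj_of {i j : V} (h : G.Adj i j) : aj G i j = 1 := by simp [aj, h]

lemma aj_not {i j : V} (h : ¬ G.Adj i j) : aj G i j = 0 := by simp [aj, h]

lemma MX_mulVec (x : V → ℝ) (i : V) :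
    (MX G *ᵥ x) i = x i + ∑ j, aj G i j * (x i - x j) := by
  simp only [mulVec, dotProduct, MX, sub_mul, ite_mul, zero_mul, Finset.sum_sub_distrib,
    Finset.sum_ite_eq, Finset.mem_univ, if_true, mul_sub, ← Finset.sum_mul]
  rw [dg]; ring

lemma MX_quad (x : V → ℝ) :
    x ⬝ᵥ (MX G *ᵥ x) = ∑ i, x i ^ 2 + (∑ i, ∑ j, aj G i j * (x i - x j) ^ 2) / 2 := by
  have h1 : x ⬝ᵥ (MX G *ᵥ x) = ∑ i, x i ^ 2 + ∑ i, ∑ j, aj G i j * (x i * (x i - x j)) := by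
    simp only [dotProduct, MX_mulVec, mul_add, Finset.sum_add_distrib, Finset.mul_sum]
    congr 1
    · exact Finset.sum_congr rfl fun i _ => by ring
    · exact Finset.sum_congr rfl fun i _ => Finset.sum_congr rfl fun j _ => by ring
  have h2 : ∑ i, ∑ j, aj G i j * (x i * (x i - x j)) =
      ∑ i, ∑ j, aj G i j * (x j * (x j - x i)) := by
    rw [Finset.sum_comm]
    exact Finset.sum_congr rfl fun i _ => Finset.sum_congr rfl fun j _ => by rw [aj_comm]
  have h3 : ∑ i, ∑ j, aj G i j * (x i - x j) ^ 2 =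
      ∑ i, ∑ j, aj G i j * (x i * (x i - x j)) + ∑ i, ∑ j, aj G i j * (x j * (x j - x i)) := by
    simp only [← Finset.sum_add_distrib]
    exact Finset.sum_congr rfl fun i _ => Finset.sum_congr rfl fun j _ => by ring
  rw [h1, h3, ← h2]; ring

lemma MX_symm : (MX G)ᵀ = MX G := by
  ext i j
  simp only [transpose_apply, MX, aj_comm G j i]
  by_cases h : i = j
  · subst h; simp
  · simp [h, Ne.symm h]

lemma MX_posDef : (MX G).PosDef := by
  refine PosDef.of_dotProduct_mulVec_pos ?_ ?_
  · rw [IsHermitian, conjTranspose_eq_transpose_of_trivial, MX_symm]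
  · intro x hx
    rw [star_trivial, MX_quad]
    have h1 : 0 ≤ ∑ i, ∑ j, aj G i j * (x i - x j) ^ 2 :=
      Finset.sum_nonneg fun i _ => Finset.sum_nonneg fun j _ =>
        mul_nonneg (aj_nonneg G i j) (sq_nonneg _)
    have h2 : 0 < ∑ i, x i ^ 2 := by
      obtain ⟨i, hi⟩ := Function.ne_iff.mp hx
      exact Finset.sum_pos' (fun i _ => sq_nonneg _) ⟨i, Finset.mem_univ _, by
        have : x i ≠ 0 := hi
        positivity⟩
    linarith

lemma ff_pos : 0 < ff G := (MX_posDef G).det_pos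

lemma MX_unit : IsUnit (MX G).det := (ff_pos G).ne'.isUnit

lemma K_symm (i j : V) : (MX G)⁻¹ i j = (MX G)⁻¹ j i := by
  have : ((MX G)⁻¹)ᵀ = (MX G)⁻¹ := by rw [transpose_nonsing_inv, MX_symm]
  exact congrFun (congrFun this j) i

lemma K_pos (i : V) : 0 < (MX G)⁻¹ i i := (MX_posDef G).inv.diag_pos

lemma MX_K (v : V) : MX G *ᵥ (fun i => (MX G)⁻¹ i v) = Pi.single v 1 := by
  have := mul_nonsing_inv (MX G) (MX_unit G)
  ext i
  have h := congrFun (congrFun this i) v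
  rw [mul_apply] at h
  rw [mulVec, dotProduct, h, one_apply, Pi.single_apply]

lemma K_eq (i v : V) : (MX G)⁻¹ i v + ∑ j, aj G i j * ((MX G)⁻¹ i v - (MX G)⁻¹ j v) =
    if i = v then 1 else 0 := by
  have := congrFun (MX_K G v) i
  rw [MX_mulVec, Pi.single_apply] at this
  exact this

lemma min_principle (x : V → ℝ) (h : ∀ i, x i < 0 → 0 ≤ (MX G *ᵥ x) i) (i : V) : 0 ≤ x i := by
  by_contra! hi
  obtain ⟨k, -, hk⟩ := Finset.exists_min_image Finset.univ x ⟨i, Finset.mem_univ i⟩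
  have hk0 : x k < 0 := lt_of_le_of_lt (hk i (Finset.mem_univ i)) hi
  have h1 := h k hk0
  rw [MX_mulVec] at h1
  have : ∑ j, aj G k j * (x k - x j) ≤ 0 := Finset.sum_nonpos fun j _ =>
    mul_nonpos_of_nonneg_of_nonpos (aj_nonneg G k j) (by linarith [hk j (Finset.mem_univ j)])
  linarith

lemma K_nonneg (i v : V) : 0 ≤ (MX G)⁻¹ i v := by
  refine min_principle G (fun i => (MX G)⁻¹ i v) (fun i _ => ?_) i
  rw [MX_K, Pi.single_apply]; split_ifs <;> norm_num

/-- hitting inequality -/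
lemma K_hit (y u v : V) : (MX G)⁻¹ y u * (MX G)⁻¹ u v ≤ (MX G)⁻¹ y v * (MX G)⁻¹ u u := by
  have key := min_principle G
    ((MX G)⁻¹ u u • (fun i => (MX G)⁻¹ i v) - (MX G)⁻¹ u v • (fun i => (MX G)⁻¹ i u)) (fun i hi => ?_) y
  · simp only [Pi.sub_apply, Pi.smul_apply, smul_eq_mul] at key
    linarith
  · have hiu : i ≠ u := by
      rintro rfl
      simp only [Pi.sub_apply, Pi.smul_apply, smul_eq_mul] at hi
      linarith
    rw [mulVec_sub, mulVec_smul, mulVec_smul, MX_K, MX_K]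
    simp only [Pi.sub_apply, Pi.smul_apply, smul_eq_mul, Pi.single_apply, hiu, if_false, mul_zero,
      sub_zero]
    have := K_pos G u
    split_ifs <;> simp [this.le]

lemma K_le (u : V) : (MX G)⁻¹ u u * (1 + dg G u / 2) ≤ 1 := by
  set x : V → ℝ := fun i => (MX G)⁻¹ i u with hx
  have h1 : x ⬝ᵥ (MX G *ᵥ x) = x u := by
    rw [hx, MX_K]; simp
  rw [MX_quad] at h1
  -- lower bound
  have h2 : 2 * ∑ j, aj G u j * (x u - x j) ^ 2 ≤ ∑ i, ∑ j, aj G i j * (x i - x j) ^ 2 := by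
    have e : ∀ i, ∑ j, aj G i j * (x i - x j) ^ 2 ≥
        (if i = u then ∑ j, aj G u j * (x u - x j) ^ 2 else 0) + aj G u i * (x u - x i) ^ 2 := by
      intro i
      split_ifs with h
      · subst h; simp
      · rw [zero_add]
        have := Finset.single_le_sum (f := fun j => aj G i j * (x i - x j) ^ 2)
          (fun j _ => mul_nonneg (aj_nonneg G i j) (sq_nonneg _)) (Finset.mem_univ u)
        refine le_trans (le_of_eq ?_) this
        rw [aj_comm G i u]; ring
    have := Finset.sum_le_sum fun i (_ : i ∈ Finset.univ) => e i
    simp only [Finset.sum_add_distrib, Finset.sum_ite_eq', Finset.mem_univ, if_true] at this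
    linarith
  have h3 : x u ^ 2 + ∑ j, aj G u j * x j ^ 2 ≤ ∑ i, x i ^ 2 := by
    rw [← Finset.add_sum_erase (f := fun i => x i ^ 2) _ (Finset.mem_univ u)]
    rw [← Finset.add_sum_erase (f := fun j => aj G u j * x j ^ 2) _ (Finset.mem_univ u), aj_self]
    have : ∑ j ∈ Finset.univ.erase u, aj G u j * x j ^ 2 ≤ ∑ j ∈ Finset.univ.erase u, x j ^ 2 := by
      refine Finset.sum_le_sum fun j _ => ?_
      unfold aj; split_ifs <;> nlinarith [sq_nonneg (x j)]
    linarith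
  have h4 : dg G u * (x u ^ 2 / 2) ≤ ∑ j, aj G u j * x j ^ 2 + ∑ j, aj G u j * (x u - x j) ^ 2 := by
    rw [dg, Finset.sum_mul, ← Finset.sum_add_distrib]
    refine Finset.sum_le_sum fun j _ => ?_
    rw [← mul_add]
    refine mul_le_mul_of_nonneg_left ?_ (aj_nonneg _ _ _)
    nlinarith [sq_nonneg (x u - 2 * x j)]
  have h5 : x u * (x u * (1 + dg G u / 2)) ≤ x u * 1 := by nlinarith
  exact le_of_mul_le_mul_left h5 (K_pos G u)

end basics
set_option linter.unusedSectionVars false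

section rankone
variable {V : Type} [Fintype V] [DecidableEq V]

lemma det_rank_one (A : Matrix V V ℝ) (hA : IsUnit A.det) (s : ℝ) (b : V → ℝ) :
    (A + s • vecMulVec b b).det = A.det * (1 + s * (b ⬝ᵥ (A⁻¹ *ᵥ b))) := by
  have h := det_add_replicateCol_mul_replicateRow (ι := Unit) hA (s • b) b
  have e : replicateCol Unit (s • b) * replicateRow Unit b = s • vecMulVec b b := by
    ext i j
    simp [mul_apply, vecMulVec_apply, mul_assoc]
  rw [e] at h
  rw [h, det_unique (n := Unit)]
  congr 1
  simp only [Matrix.add_apply, Matrix.one_apply_eq]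
  congr 1
  rw [Matrix.mul_assoc]
  simp only [mul_apply, replicateRow_apply, replicateCol_apply, dotProduct, mulVec, Pi.smul_apply,
    smul_eq_mul, Finset.mul_sum]
  exact Finset.sum_congr rfl fun i _ => Finset.sum_congr rfl fun j _ => by ring

lemma det_add_diag (A : Matrix V V ℝ) (hA : IsUnit A.det) (s : ℝ) (u : V) :
    (A + s • vecMulVec (Pi.single u 1) (Pi.single u 1)).det = A.det * (1 + s * A⁻¹ u u) := by
  rw [det_rank_one A hA]
  simp

lemma edge_form (K : Matrix V V ℝ) (u v : V) :
    (Pi.single u 1 - Pi.single v 1 : V → ℝ) ⬝ᵥ (K *ᵥ (Pi.single u 1 - Pi.single v 1)) =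
      K u u - K u v - (K v u - K v v) := by
  rw [mulVec_sub, sub_dotProduct]
  simp

variable (G : SimpleGraph V)

lemma MX_del {u v : V} (h : G.Adj u v) :
    MX G = MX (G.deleteEdges {s(u, v)}) +
      (1 : ℝ) • vecMulVec (Pi.single u 1 - Pi.single v 1) (Pi.single u 1 - Pi.single v 1) := by
  have huv : u ≠ v := h.ne
  have ha : ∀ i j, aj G i j = aj (G.deleteEdges {s(u, v)}) i j +
      ((if i = u then (if j = v then 1 else 0) else 0) +
        (if i = v then (if j = u then 1 else 0) else 0)) := by
    intro i j
    have hadj : (G.deleteEdges {s(u, v)}).Adj i j ↔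
        G.Adj i j ∧ ¬ ((i = u ∧ j = v) ∨ (i = v ∧ j = u)) := by
      simp [SimpleGraph.deleteEdges_adj]
    by_cases hc : (i = u ∧ j = v) ∨ (i = v ∧ j = u)
    · rw [aj_not _ (fun h' => (hadj.1 h').2 hc)]
      rcases hc with ⟨rfl, rfl⟩ | ⟨rfl, rfl⟩
      · rw [aj_of G h]; simp [huv]
      · rw [aj_of G h.symm]; simp [huv.symm]
    · have e1 : aj G i j = aj (G.deleteEdges {s(u, v)}) i j := by
        by_cases h' : G.Adj i j
        · rw [aj_of G h', aj_of _ (hadj.2 ⟨h', hc⟩)]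
        · rw [aj_not G h', aj_not _ (fun hq => h' (hadj.1 hq).1)]
      rw [e1]
      by_cases h1 : i = u <;> by_cases h2 : j = v <;> by_cases h3 : i = v <;>
        by_cases h4 : j = u <;> simp_all
  have hd : ∀ i, dg G i = dg (G.deleteEdges {s(u, v)}) i +
      ((if i = u then 1 else 0) + (if i = v then 1 else 0)) := by
    intro i
    simp only [dg, ha, Finset.sum_add_distrib]
    congr 2
    · split_ifs <;> simp
    · split_ifs <;> simp
  ext i j
  simp only [MX, hd, ha i j, Matrix.add_apply, Matrix.smul_apply, vecMulVec_apply, Pi.sub_apply,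
    Pi.single_apply, smul_eq_mul, one_mul]
  by_cases h5 : i = j
  · subst h5
    by_cases h1 : i = u
    · subst h1; simp [huv]; ring
    · by_cases h2 : i = v
      · subst h2; simp [h1]; ring
      · simp [h1, h2]
  · by_cases h1 : i = u
    · subst h1
      have h6 : ¬ j = i := fun h => h5 h.symm
      by_cases h2 : j = v <;> simp [huv, huv.symm, h5, h6, h2]
      ring
    · by_cases h2 : i = v
      · subst h2
        have h6 : ¬ j = i := fun h => h5 h.symm
        by_cases h3 : j = u <;> simp [h1, huv, h5, h6, h3]
        ring
      · simp [h1, h2, h5]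

lemma dg_del {u v : V} (h : G.Adj u v) (i : V) : dg G i = dg (G.deleteEdges {s(u, v)}) i +
      ((if i = u then 1 else 0) + (if i = v then 1 else 0)) := by
  have huv : u ≠ v := h.ne
  have := congrFun (congrFun (MX_del G h) i) i
  simp only [MX, aj_self, Matrix.add_apply, Matrix.smul_apply, vecMulVec_apply, Pi.sub_apply,
    Pi.single_apply, smul_eq_mul, one_mul, if_true] at this
  by_cases h1 : i = u
  · subst h1; simp [huv] at this ⊢; linarith
  · by_cases h2 : i = v
    · subst h2; simp [h1] at this ⊢; linarith
    · simp [h1, h2] at this ⊢; linarith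

lemma ff_del {u v : V} (h : G.Adj u v) : ff G = ff (G.deleteEdges {s(u, v)}) *
    (1 + ((MX (G.deleteEdges {s(u, v)}))⁻¹ u u + (MX (G.deleteEdges {s(u, v)}))⁻¹ v v -
      2 * (MX (G.deleteEdges {s(u, v)}))⁻¹ u v)) := by
  unfold ff
  rw [MX_del G h, det_rank_one _ (MX_unit _), edge_form, K_symm _ v u]
  ring

lemma ff_del' {u v : V} (h : G.Adj u v) : ff (G.deleteEdges {s(u, v)}) = ff G *
    (1 - ((MX G)⁻¹ u u + (MX G)⁻¹ v v - 2 * (MX G)⁻¹ u v)) := by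
  have e : MX (G.deleteEdges {s(u, v)}) = MX G +
      (-1 : ℝ) • vecMulVec (Pi.single u 1 - Pi.single v 1) (Pi.single u 1 - Pi.single v 1) := by
    rw [MX_del G h, add_assoc, ← add_smul]; simp
  unfold ff
  rw [e, det_rank_one _ (MX_unit _), edge_form, K_symm _ v u]
  ring

end rankone

section leaf
variable {V W : Type} [Fintype V] [DecidableEq V] [Fintype W] [DecidableEq W]

lemma leaf_det (G : SimpleGraph V) (f : W → V) (hf : Function.Injective f) (u : V)
    (hu : ∀ v, v ≠ u ↔ v ∈ Set.range f) (w : W) (hw : ∀ v, G.Adj u v ↔ v = f w) (s : ℝ)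
    (hs : 0 ≤ s) :
    (MX G + s • vecMulVec (Pi.single u 1) (Pi.single u 1)).det =
      (2 + s) * ff (G.comap f) + (1 + s) * hh (G.comap f) w := by
  have hne : ∀ x, f x ≠ u := fun x => (hu _).2 ⟨x, rfl⟩
  let F : W ⊕ Unit ≃ V := Equiv.ofBijective (Sum.elim f (fun _ => u)) (by
    constructor
    · rintro (a | a) (b | b) hab
      · simp at hab; rw [hf hab]
      · exact absurd hab (hne a)
      · exact absurd hab.symm (hne b)
      · rfl
    · intro v
      by_cases hv : v = u
      · exact ⟨Sum.inr (), hv.symm⟩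
      · obtain ⟨x, hx⟩ := (hu v).1 hv
        exact ⟨Sum.inl x, hx⟩)
  have F1 : ∀ x, F (Sum.inl x) = f x := fun x => rfl
  have F2 : ∀ x, F (Sum.inr x) = u := fun x => rfl
  have hsum : ∀ g : V → ℝ, ∑ v, g v = ∑ x, g (f x) + g u := by
    intro g
    rw [← Equiv.sum_comp F, Fintype.sum_sum_type]
    simp [F1, F2]
  have ha : ∀ x y, aj (G.comap f) x y = aj G (f x) (f y) := fun x y => rfl
  have hau : ∀ x, aj G u (f x) = if x = w then 1 else 0 := by
    intro x; unfold aj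
    simp only [hw, hf.eq_iff]
  have hau' : ∀ x, aj G (f x) u = if x = w then 1 else 0 := by
    intro x; rw [aj_comm, hau]
  have hdu : dg G u = 1 := by
    rw [dg, hsum]; simp [hau, aj_self]
  have hdx : ∀ x, dg G (f x) = dg (G.comap f) x + if x = w then 1 else 0 := by
    intro x
    rw [dg, hsum, hau']; rfl
  have hblk : (MX G + s • vecMulVec (Pi.single u 1) (Pi.single u 1)).submatrix F F =
      fromBlocks (MX (G.comap f) + (1 : ℝ) • vecMulVec (Pi.single w 1) (Pi.single w 1))
        (replicateCol Unit (-(Pi.single w 1 : W → ℝ))) (replicateRow Unit (-(Pi.single w 1 : W → ℝ)))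
        (Matrix.diagonal fun _ => 2 + s) := by
    ext (i | i) (j | j)
    · simp only [submatrix_apply, F1, Matrix.add_apply, Matrix.smul_apply, vecMulVec_apply,
        Pi.single_apply, hne, fromBlocks_apply₁₁, MX, ha, hdx, hf.eq_iff, smul_eq_mul, one_mul]
      by_cases h1 : i = j <;> by_cases h2 : i = w <;> by_cases h3 : j = w <;> simp_all <;> ring
    · simp [F1, F2, MX, vecMulVec_apply, hne, hau', Pi.single_apply]
    · simp [F1, F2, MX, vecMulVec_apply, hne, (hne _).symm, hau, Pi.single_apply]
    · simp [F2, MX, vecMulVec_apply, hdu, aj_self]; ring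
  have h2s : (2 + s) ≠ 0 := by positivity
  let _ : Invertible (Matrix.diagonal fun _ : Unit => 2 + s) :=
    ⟨Matrix.diagonal fun _ : Unit => (2 + s)⁻¹, by simp [h2s], by simp [h2s]⟩
  rw [← det_submatrix_equiv_self F, hblk, det_fromBlocks₂₂]
  have e : MX (G.comap f) + (1 : ℝ) • vecMulVec (Pi.single w 1) (Pi.single w 1) -
      replicateCol Unit (-(Pi.single w 1 : W → ℝ)) * ⅟(Matrix.diagonal fun _ : Unit => 2 + s) *
        replicateRow Unit (-(Pi.single w 1 : W → ℝ)) =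
      MX (G.comap f) + (1 - (2 + s)⁻¹) • vecMulVec (Pi.single w 1) (Pi.single w 1) := by
    have : ⅟(Matrix.diagonal fun _ : Unit => 2 + s) = Matrix.diagonal fun _ : Unit => (2 + s)⁻¹ := rfl
    rw [this]
    ext i j
    simp [mul_apply, vecMulVec_apply]
    ring
  rw [e, det_add_diag _ (MX_unit _)]
  simp only [det_diagonal, Finset.univ_unique, Finset.prod_singleton, hh, ff]
  field_simp
  ring

lemma leaf_ff (G : SimpleGraph V) (f : W → V) (hf : Function.Injective f) (u : V)
    (hu : ∀ v, v ≠ u ↔ v ∈ Set.range f) (w : W) (hw : ∀ v, G.Adj u v ↔ v = f w) :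
    ff G = 2 * ff (G.comap f) + hh (G.comap f) w := by
  have := leaf_det G f hf u hu w hw 0 le_rfl
  simpa [ff] using this

lemma leaf_hh (G : SimpleGraph V) (f : W → V) (hf : Function.Injective f) (u : V)
    (hu : ∀ v, v ≠ u ↔ v ∈ Set.range f) (w : W) (hw : ∀ v, G.Adj u v ↔ v = f w) :
    hh G u = ff (G.comap f) + hh (G.comap f) w := by
  have h1 := leaf_det G f hf u hu w hw 1 zero_le_one
  have h0 := leaf_ff G f hf u hu w hw
  rw [det_add_diag _ (MX_unit _)] at h1
  have : hh G u = (MX G).det * (1 + 1 * (MX G)⁻¹ u u) - ff G := by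
    rw [hh, ff]; ring
  rw [this, h1, h0]; ring

end leaf
set_option linter.unusedSectionVars false

section unicyc
variable {V : Type} [Fintype V] [DecidableEq V] (G : SimpleGraph V)

lemma dg_nat (i : V) : ∃ k : ℕ, dg G i = k := by
  classical
  refine ⟨(Finset.univ.filter fun j => G.Adj i j).card, ?_⟩
  rw [dg, Finset.card_filter]
  push_cast
  exact Finset.sum_congr rfl fun j _ => by by_cases h : G.Adj i j <;> simp [aj, h]

lemma dg_nonneg (i : V) : 0 ≤ dg G i := by
  obtain ⟨k, hk⟩ := dg_nat G i
  rw [hk]; positivity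

lemma one_le_dg {i j : V} (h : G.Adj i j) : 1 ≤ dg G i := by
  rw [← aj_of G h]
  exact Finset.single_le_sum (f := fun j => aj G i j) (fun j _ => aj_nonneg G i j)
    (Finset.mem_univ j)

lemma exists_adj {i : V} (h : dg G i ≠ 0) : ∃ j, G.Adj i j := by
  by_contra! hc
  exact h (Finset.sum_eq_zero fun j _ => aj_not G (hc j))

/-- A graph with as many edges as vertices either has an edge between a vertex of degree at least
three and one of degree at least two, or is two-regular. -/
lemma two_reg (hn : ∑ i, dg G i = 2 * Fintype.card V)
    (hno : ∀ u v, G.Adj u v → 3 ≤ dg G u → dg G v < 2) (i : V) : dg G i = 2 := by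
  -- integer case analysis for an edge
  have hcase : ∀ u v, G.Adj u v → 0 ≤ (dg G u)⁻¹ + (dg G v)⁻¹ - 1 ∧
      ((dg G u)⁻¹ + (dg G v)⁻¹ - 1 = 0 → dg G u = 2) := by
    intro u v h
    obtain ⟨a, ha⟩ := dg_nat G u
    obtain ⟨b, hb⟩ := dg_nat G v
    have h1 := one_le_dg G h
    have h2 := one_le_dg G h.symm
    have h3 := hno u v h
    have h4 := hno v u h.symm
    rw [ha, hb] at *
    norm_cast at h1 h2 h3 h4
    have hb0 : (0 : ℝ) < (b : ℝ)⁻¹ := by positivity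
    have ha0 : (0 : ℝ) < (a : ℝ)⁻¹ := by positivity
    by_cases e1 : a = 1
    · subst e1; push_cast; norm_num; omega
    by_cases e2 : b = 1
    · subst e2; push_cast; norm_num; omega
    have e3 : a = 2 := by omega
    have e4 : b = 2 := by omega
    subst e3; subst e4; norm_num
  have hterm : ∀ u v, 0 ≤ aj G u v * ((dg G u)⁻¹ + (dg G v)⁻¹ - 1) := by
    intro u v
    by_cases h : G.Adj u v
    · exact mul_nonneg (aj_nonneg _ _ _) (hcase u v h).1
    · rw [aj_not G h, zero_mul]
  have hloc : ∀ u, 0 ≤ 1 - dg G u * (dg G u)⁻¹ := by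
    intro u
    by_cases h : dg G u = 0
    · rw [h]; norm_num
    · rw [mul_inv_cancel₀ h]; norm_num
  have s1 : ∑ u, ∑ v, aj G u v * (dg G u)⁻¹ = ∑ u, dg G u * (dg G u)⁻¹ := by
    refine Finset.sum_congr rfl fun u _ => ?_
    rw [← Finset.sum_mul]; rfl
  have s2 : ∑ u, ∑ v, aj G u v * (dg G v)⁻¹ = ∑ u, dg G u * (dg G u)⁻¹ := by
    rw [Finset.sum_comm, ← s1]
    exact Finset.sum_congr rfl fun u _ => Finset.sum_congr rfl fun v _ => by rw [aj_comm]
  have s3 : ∑ u, ∑ v, aj G u v = 2 * Fintype.card V := hn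
  have htot : ∑ u, ∑ v, aj G u v * ((dg G u)⁻¹ + (dg G v)⁻¹ - 1) +
      2 * ∑ u, (1 - dg G u * (dg G u)⁻¹) = 0 := by
    simp only [mul_sub, mul_add, mul_one, Finset.sum_sub_distrib, Finset.sum_add_distrib, s1, s2, s3]
    simp
    ring
  have n1 : 0 ≤ ∑ u, ∑ v, aj G u v * ((dg G u)⁻¹ + (dg G v)⁻¹ - 1) :=
    Finset.sum_nonneg fun u _ => Finset.sum_nonneg fun v _ => hterm u v
  have n2 : 0 ≤ ∑ u, (1 - dg G u * (dg G u)⁻¹) := Finset.sum_nonneg fun u _ => hloc u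
  have z1 : ∑ u, ∑ v, aj G u v * ((dg G u)⁻¹ + (dg G v)⁻¹ - 1) = 0 := by linarith
  have z2 : ∑ u, (1 - dg G u * (dg G u)⁻¹) = 0 := by linarith
  have hi0 : dg G i ≠ 0 := by
    intro h0
    have := (Finset.sum_eq_zero_iff_of_nonneg fun u _ => hloc u).1 z2 i (Finset.mem_univ i)
    rw [h0] at this; norm_num at this
  obtain ⟨j, hj⟩ := exists_adj G hi0
  have w1 := (Finset.sum_eq_zero_iff_of_nonneg fun u _ =>
    Finset.sum_nonneg fun v _ => hterm u v).1 z1 i (Finset.mem_univ i)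
  have w2 := (Finset.sum_eq_zero_iff_of_nonneg fun v _ => hterm i v).1 w1 j (Finset.mem_univ j)
  rw [aj_of G hj, one_mul] at w2
  exact (hcase i j hj).2 w2

lemma other_nbr {u v : V} (hd : dg G u = 2) (h : G.Adj u v) :
    ∃ y, G.Adj u y ∧ ∀ g : V → ℝ, ∑ j, aj G u j * g j = g v + g y := by
  have e1 : ∑ j ∈ Finset.univ.erase v, aj G u j = 1 := by
    have := Finset.add_sum_erase Finset.univ (fun j => aj G u j) (Finset.mem_univ v)
    rw [aj_of G h] at this
    have h2 : ∑ j, aj G u j = 2 := hd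
    linarith
  obtain ⟨y, hy, hy0⟩ := Finset.exists_ne_zero_of_sum_ne_zero (by rw [e1]; norm_num :
    ∑ j ∈ Finset.univ.erase v, aj G u j ≠ 0)
  have hadj : G.Adj u y := by
    by_contra hc
    exact hy0 (aj_not G hc)
  have e2 : ∑ j ∈ (Finset.univ.erase v).erase y, aj G u j = 0 := by
    have := Finset.add_sum_erase (Finset.univ.erase v) (fun j => aj G u j) hy
    rw [aj_of G hadj] at this
    linarith
  have e3 := (Finset.sum_eq_zero_iff_of_nonneg fun j _ => aj_nonneg G u j).1 e2
  refine ⟨y, hadj, fun g => ?_⟩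
  rw [← Finset.add_sum_erase Finset.univ _ (Finset.mem_univ v), ← Finset.add_sum_erase _ _ hy,
    Finset.sum_eq_zero (s := (Finset.univ.erase v).erase y) (fun j hj => by rw [e3 j hj, zero_mul]),
    aj_of G h, aj_of G hadj]
  ring

lemma sum_split (u : V) (g : V → ℝ) (c : ℝ) :
    ∑ j, aj G u j * (c - g j) = dg G u * c - ∑ j, aj G u j * g j := by
  simp only [mul_sub, Finset.sum_sub_distrib, ← Finset.sum_mul]; rfl

lemma two_reg_p (hreg : ∀ i, dg G i = 2) (u v : V) (h : G.Adj u v) :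
    (3 - √5) / 2 * (MX G)⁻¹ v v ≤ (MX G)⁻¹ u v := by
  classical
  set K := (MX G)⁻¹ with hK
  obtain ⟨⟨a, b⟩, hab, hmin⟩ := Finset.exists_min_image
    (Finset.univ.filter fun p : V × V => G.Adj p.1 p.2) (fun p => K p.1 p.2 / K p.2 p.2)
    ⟨(u, v), by simpa using h⟩
  simp only [Finset.mem_filter, Finset.mem_univ, true_and, Prod.forall] at hab hmin
  set p := K a b / K b b with hp
  have hbpos : 0 < K b b := K_pos G b
  have hapos : 0 < K a a := K_pos G a
  have hp0 : 0 ≤ p := div_nonneg (K_nonneg G a b) hbpos.le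
  have hpK : K a b = p * K b b := by rw [hp]; field_simp
  obtain ⟨y, hy, hs⟩ := other_nbr G (hreg a) hab
  have e := K_eq G a b
  rw [sum_split, hs, hreg, if_neg hab.ne] at e
  have e' : 3 * K a b = K b b + K y b := by linarith
  have h1 := K_hit G y a b
  have h2 : p * K a a ≤ K y a := by
    have := hmin y a hy.symm
    rwa [le_div_iff₀ hapos] at this
  have h3 : p * K a b ≤ K y b := by
    have h4 : p * K a a * K a b ≤ K y b * K a a :=
      le_trans (mul_le_mul_of_nonneg_right h2 (K_nonneg G a b)) h1
    have : (p * K a b) * K a a ≤ K y b * K a a := by linarith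
    exact le_of_mul_le_mul_right this hapos
  have h5 : 1 ≤ p * (3 - p) := by
    have : K b b * 1 ≤ K b b * (p * (3 - p)) := by
      rw [hpK] at e' h3
      nlinarith
    exact le_of_mul_le_mul_left this hbpos
  have h6 : (3 - √5) / 2 ≤ p := by
    have s5 : √5 ^ 2 = 5 := Real.sq_sqrt (by norm_num)
    have s0 : 0 ≤ √5 := Real.sqrt_nonneg 5
    by_contra! hc
    nlinarith
  have h7 := hmin u v h
  rw [le_div_iff₀ (K_pos G v)] at h7
  exact le_trans (mul_le_mul_of_nonneg_right h6 (K_pos G v).le) h7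

lemma unicyc [Nonempty V] (hn : ∑ i, dg G i = 2 * Fintype.card V) :
    ∃ u v, G.Adj u v ∧ ff G ≤ √5 * ff (G.deleteEdges {s(u, v)}) := by
  have s5 : √5 ^ 2 = 5 := Real.sq_sqrt (by norm_num)
  have s0 : 0 ≤ √5 := Real.sqrt_nonneg 5
  have sl : 13 / 6 ≤ √5 := by nlinarith
  by_cases hex : ∃ u v, G.Adj u v ∧ 3 ≤ dg G u ∧ 2 ≤ dg G v
  · obtain ⟨u, v, h, hu, hv⟩ := hex
    refine ⟨u, v, h, ?_⟩
    have huv := h.ne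
    rw [ff_del G h]
    set G' := G.deleteEdges {s(u, v)}
    have d1 := dg_del G h u
    have d2 := dg_del G h v
    rw [if_pos rfl, if_neg huv] at d1
    rw [if_pos rfl, if_neg huv.symm] at d2
    have k1 := K_le G' u
    have k2 := K_le G' v
    have p1 := K_pos G' u
    have p2 := K_pos G' v
    have p3 := K_nonneg G' u v
    have b1 : (MX G')⁻¹ u u ≤ 1 / 2 := by
      have : 2 ≤ dg G' u := by linarith
      nlinarith
    have b2 : (MX G')⁻¹ v v ≤ 2 / 3 := by
      have : 1 ≤ dg G' v := by linarith
      nlinarith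
    rw [mul_comm]
    exact mul_le_mul_of_nonneg_right (by linarith) (ff_pos G').le
  · push Not at hex
    have hreg := two_reg G hn hex
    obtain ⟨v, -, hv⟩ := Finset.exists_max_image Finset.univ (fun v => (MX G)⁻¹ v v)
      Finset.univ_nonempty
    obtain ⟨u, hu⟩ := exists_adj G (i := v) (by rw [hreg]; norm_num)
    obtain ⟨y, hy, hs⟩ := other_nbr G (hreg v) hu
    have e := K_eq G v v
    rw [sum_split, hs, hreg, if_pos rfl] at e
    have p1 := two_reg_p G hreg u v hu.symm
    have p2 := two_reg_p G hreg y v hy.symm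
    have hb : 1 ≤ √5 * (MX G)⁻¹ v v := by nlinarith
    have m1 := hv u (Finset.mem_univ u)
    have m2 := hv y (Finset.mem_univ y)
    have fin : ∀ w, G.Adj v w → (MX G)⁻¹ v v + (MX G)⁻¹ w w - 2 * (MX G)⁻¹ w v ≤
        1 - (MX G)⁻¹ v v → ff G ≤ √5 * ff (G.deleteEdges {s(v, w)}) := by
      intro w hw hle
      rw [ff_del' G hw, K_symm G v w]
      have := ff_pos G
      have h1 : 1 ≤ √5 * (1 - ((MX G)⁻¹ v v + (MX G)⁻¹ w w - 2 * (MX G)⁻¹ w v)) := by nlinarith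
      nlinarith
    by_cases hle : (MX G)⁻¹ v v + (MX G)⁻¹ u u - 2 * (MX G)⁻¹ u v ≤ 1 - (MX G)⁻¹ v v
    · exact ⟨v, u, hu, fin u hu hle⟩
    · refine ⟨v, y, hy, fin y hy ?_⟩
      linarith

end unicyc
set_option linter.unusedSectionVars false

lemma fib_mul_lt (a b : ℕ) (ha : 1 ≤ a) (hb : 1 ≤ b) :
    √5 * (Nat.fib (2 * a) : ℝ) * Nat.fib (2 * b) < Nat.fib (2 * (a + b)) := by
  have s5 : √5 ^ 2 = 5 := Real.sq_sqrt (by norm_num)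
  have s0 : 0 < √5 := Real.sqrt_pos.2 (by norm_num)
  rw [Real.coe_fib_eq, Real.coe_fib_eq, Real.coe_fib_eq]
  have hxy : Real.goldenConj ^ 2 < Real.goldenRatio ^ 2 := by
    have h1 := Real.one_lt_goldenRatio
    have h2 := Real.goldenConj_neg
    have h3 := Real.neg_one_lt_goldenConj
    nlinarith
  have hy : 0 < Real.goldenConj ^ 2 := by
    have := Real.goldenConj_ne_zero
    positivity
  simp only [pow_mul, pow_add]
  generalize Real.goldenConj ^ 2 = y at *
  generalize Real.goldenRatio ^ 2 = x at *
  have h1 : y ^ a < x ^ a := pow_lt_pow_left₀ hxy hy.le (by omega)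
  have h2 : y ^ b < x ^ b := pow_lt_pow_left₀ hxy hy.le (by omega)
  have p1 : 0 < y ^ a := by positivity
  have p2 : 0 < y ^ b := by positivity
  have e : √5 * ((x ^ a - y ^ a) / √5) * ((x ^ b - y ^ b) / √5) =
      ((x ^ a - y ^ a) * (x ^ b - y ^ b)) / √5 := by field_simp
  rw [e]
  apply div_lt_div_of_pos_right _ s0
  nlinarith [mul_pos p1 (sub_pos.2 h2), mul_pos p2 (sub_pos.2 h1)]

/-- `l` lists a Hamiltonian path whose edges are exactly those of `G`. -/
def HP {V : Type} (G : SimpleGraph V) (l : List V) : Prop :=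
  l.Nodup ∧ (∀ v, v ∈ l) ∧ ∀ a b, G.Adj a b ↔ (a, b) ∈ l.zip l.tail ∨ (b, a) ∈ l.zip l.tail

lemma HP_cons {V W : Type} (G : SimpleGraph V) (f : W → V) (hf : Function.Injective f) (u : V)
    (hu : ∀ v, v ≠ u ↔ v ∈ Set.range f) (w : W) (hw : ∀ v, G.Adj u v ↔ v = f w) (t : List W)
    (h : HP (G.comap f) (w :: t)) : HP G (u :: (w :: t).map f) := by
  obtain ⟨h1, h2, h3⟩ := h
  have hne : ∀ x, f x ≠ u := fun x => (hu _).2 ⟨x, rfl⟩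
  refine ⟨?_, ?_, ?_⟩
  · rw [List.nodup_cons]
    refine ⟨?_, h1.map hf⟩
    intro hm
    obtain ⟨x, -, hx⟩ := List.mem_map.1 hm
    exact hne x hx
  · intro v
    by_cases hv : v = u
    · simp [hv]
    · obtain ⟨x, rfl⟩ := (hu v).1 hv
      exact List.mem_cons_of_mem _ (List.mem_map_of_mem (h2 x))
  · have hz : ∀ a b, (a, b) ∈ (u :: (w :: t).map f).zip (u :: (w :: t).map f).tail ↔
        (a = u ∧ b = f w) ∨ ∃ x y, (x, y) ∈ (w :: t).zip (w :: t).tail ∧ f x = a ∧ f y = b := by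
      intro a b
      have : (u :: (w :: t).map f).zip (u :: (w :: t).map f).tail =
          (u, f w) :: ((w :: t).zip (w :: t).tail).map (Prod.map f f) := by
        rw [← List.zip_map]
        simp
      rw [this]
      simp only [List.mem_cons, List.mem_map, Prod.mk.injEq, Prod.exists, Prod.map]
    intro a b
    rw [hz, hz]
    by_cases ha : a = u
    · subst ha
      rw [hw]
      constructor
      · intro hb; exact Or.inl (Or.inl ⟨rfl, hb⟩)
      · rintro ((⟨-, h⟩ | ⟨x, y, -, hx, -⟩) | (⟨h, hh⟩ | ⟨x, y, -, -, hx⟩))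
        · exact h
        · exact absurd hx (hne x)
        · exact absurd hh.symm (hne w)
        · exact absurd hx (hne y)
    by_cases hb : b = u
    · subst hb
      rw [G.adj_comm, hw]
      constructor
      · intro hb; exact Or.inr (Or.inl ⟨rfl, hb⟩)
      · rintro ((⟨h, hh⟩ | ⟨x, y, -, -, hx⟩) | (⟨-, h⟩ | ⟨x, y, -, hx, -⟩))
        · exact absurd h ha
        · exact absurd hx (hne y)
        · exact h
        · exact absurd hx (hne x)
    obtain ⟨x, rfl⟩ := (hu a).1 ha
    obtain ⟨y, rfl⟩ := (hu b).1 hb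
    have := h3 x y
    rw [SimpleGraph.comap_adj] at this
    rw [this]
    simp only [hne, false_and, false_or, hf.eq_iff]
    constructor
    · rintro (h | h)
      · exact Or.inl ⟨x, y, h, rfl, rfl⟩
      · exact Or.inr ⟨y, x, h, rfl, rfl⟩
    · rintro (⟨x', y', h, rfl, rfl⟩ | ⟨x', y', h, rfl, rfl⟩)
      · exact Or.inl h
      · exact Or.inr h

section misc
variable {V : Type} [Fintype V] [DecidableEq V] (G : SimpleGraph V)

lemma dg_degree (v : V) [Fintype (G.neighborSet v)] : dg G v = G.degree v := by
  classical
  rw [← SimpleGraph.card_neighborFinset_eq_degree, dg]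
  simp only [aj, Finset.sum_boole]
  congr 2
  ext w; simp

lemma sum_dg : ∑ v, dg G v = 2 * (Nat.card G.edgeSet : ℝ) := by
  classical
  have := G.sum_degrees_eq_twice_card_edges
  have h2 : (∑ v, (G.degree v : ℝ)) = 2 * (G.edgeFinset.card : ℝ) := by exact_mod_cast this
  rw [Nat.card_eq_fintype_card, ← SimpleGraph.edgeFinset_card, ← h2]
  exact Finset.sum_congr rfl fun v _ => dg_degree G v

lemma conn_card (h : G.Connected) : (Fintype.card V : ℝ) ≤ Nat.card G.edgeSet + 1 := by
  have := h.card_vert_le_card_edgeSet_add_one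
  rw [Nat.card_eq_fintype_card] at this
  exact_mod_cast this

lemma dg_comap_val (p : V → Prop) [Fintype {x // p x}] (hp : ∀ i j, G.Adj i j → (p i ↔ p j)) (x : {x // p x}) :
    dg (G.comap (Subtype.val : {x // p x} → V)) x = dg G x := by
  classical
  have e : dg G x = ∑ j ∈ Finset.univ.filter p, aj G x j := by
    rw [dg, Finset.sum_filter]
    refine Finset.sum_congr rfl fun j _ => ?_
    split_ifs with h
    · rfl
    · exact aj_not G fun hadj => h ((hp _ _ hadj).1 x.2)
  rw [e, Finset.sum_subtype (p := p) _ (by simp)]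
  rfl

lemma ff_split (p : V → Prop) [DecidablePred p] (hp : ∀ i j, G.Adj i j → (p i ↔ p j)) :
    ff G = ff (G.comap (Subtype.val : {x // p x} → V)) *
      ff (G.comap (Subtype.val : {x // ¬ p x} → V)) := by
  unfold ff
  rw [twoBlockTriangular_det (MX G) p]
  · congr 2
    · ext i j
      simp only [toSquareBlockProp, MX, dg_comap_val G p hp, Subtype.ext_iff]
      rfl
    · ext i j
      simp only [toSquareBlockProp, MX,
        dg_comap_val G (fun x => ¬ p x) (fun i j h => not_congr (hp i j h)), Subtype.ext_iff]
      rfl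
  · intro i hi j hj
    have hij : i ≠ j := by rintro rfl; exact hi hj
    simp [MX, hij, aj_not G fun h => hi ((hp _ _ h).2 hj)]

lemma leaf_sum {W : Type} [Fintype W] (f : W → V) (hf : Function.Injective f) (u : V)
    (hu : ∀ v, v ≠ u ↔ v ∈ Set.range f) (w : W) (hw : ∀ v, G.Adj u v ↔ v = f w) :
    ∑ v, dg G v = ∑ x, dg (G.comap f) x + 2 ∧ Fintype.card V = Fintype.card W + 1 := by
  classical
  have hne : ∀ x, f x ≠ u := fun x => (hu _).2 ⟨x, rfl⟩
  let F : W ⊕ Unit ≃ V := Equiv.ofBijective (Sum.elim f (fun _ => u)) (by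
    constructor
    · rintro (a | a) (b | b) hab
      · simp at hab; rw [hf hab]
      · exact absurd hab (hne a)
      · exact absurd hab.symm (hne b)
      · rfl
    · intro v
      by_cases hv : v = u
      · exact ⟨Sum.inr (), hv.symm⟩
      · obtain ⟨x, hx⟩ := (hu v).1 hv
        exact ⟨Sum.inl x, hx⟩)
  have F1 : ∀ x, F (Sum.inl x) = f x := fun x => rfl
  have F2 : ∀ x, F (Sum.inr x) = u := fun x => rfl
  have hsum : ∀ g : V → ℝ, ∑ v, g v = ∑ x, g (f x) + g u := by
    intro g
    rw [← Equiv.sum_comp F, Fintype.sum_sum_type]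
    simp [F1, F2]
  have hau : ∀ x, aj G u (f x) = if x = w then 1 else 0 := by
    intro x; unfold aj
    simp only [hw, hf.eq_iff]
  have hau' : ∀ x, aj G (f x) u = if x = w then 1 else 0 := by
    intro x; rw [aj_comm, hau]
  have hdu : dg G u = 1 := by
    rw [dg, hsum]; simp [hau, aj_self]
  have hdx : ∀ x, dg G (f x) = dg (G.comap f) x + if x = w then 1 else 0 := by
    intro x
    rw [dg, hsum, hau']; rfl
  constructor
  · rw [hsum, hdu]
    simp only [hdx, Finset.sum_add_distrib]
    simp
    ring
  · rw [← Fintype.card_congr F]; simp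

lemma sub_single [Subsingleton V] (v : V) : ff G = 1 ∧ hh G v = 1 := by
  have ha : ∀ i j, aj G i j = 0 := fun i j => by rw [Subsingleton.elim j i, aj_self]
  have hM : MX G = 1 := by
    ext i j
    rw [Subsingleton.elim j i]
    simp [MX, dg, ha]
  constructor
  · rw [ff, hM, det_one]
  · rw [hh, ff, hM]; simp

end misc
set_option linter.unusedSectionVars false

lemma leaf_data {V : Type} [Fintype V] [DecidableEq V] (G : SimpleGraph V) (hc : G.Connected)
    (u : V) (hd : dg G u = 1) :
    ∃ w : {x // x ≠ u}, (∀ v, G.Adj u v ↔ v = w.1) ∧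
      (G.comap (Subtype.val : {x // x ≠ u} → V)).Connected := by
  classical
  have hdeg : G.degree u = 1 := by
    rw [dg_degree] at hd; exact_mod_cast hd
  obtain ⟨w, hw, huniq⟩ := SimpleGraph.degree_eq_one_iff_existsUnique_adj.mp hdeg
  refine ⟨⟨w, hw.ne'⟩, fun v => ⟨fun h => huniq v h, ?_⟩, ?_⟩
  · rintro rfl; exact hw
  · exact hc.induce_compl_singleton_of_degree_eq_one hdeg

open Classical in
lemma exists_component {V : Type} [Fintype V] [DecidableEq V] (G : SimpleGraph V)
    (hlt : ∑ v, dg G v < 2 * Fintype.card V) :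
    ∃ C : G.ConnectedComponent, ∑ v : {v // v ∈ C.supp}, dg G v.1 <
      2 * (Nat.card {v // v ∈ C.supp} : ℝ) := by
  classical
  by_contra! hcon
  have h1 : ∑ v, (dg G v - 2) = ∑ C : G.ConnectedComponent,
      ∑ v ∈ Finset.univ.filter (fun v => G.connectedComponentMk v = C), (dg G v - 2) :=
    (Finset.sum_fiberwise _ _ _).symm
  have h2 : 0 ≤ ∑ v, (dg G v - 2) := by
    rw [h1]
    refine Finset.sum_nonneg fun C _ => ?_
    have := hcon C
    rw [Finset.sum_subtype (p := fun v => v ∈ C.supp) _ (by simp), Finset.sum_sub_distrib]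
    simp only [Finset.sum_const, Finset.card_univ, nsmul_eq_mul, Nat.card_eq_fintype_card] at this ⊢
    linarith
  rw [Finset.sum_sub_distrib] at h2
  simp only [Finset.sum_const, Finset.card_univ, nsmul_eq_mul] at h2
  linarith

theorem main_ind (k : ℕ) : ∀ (V : Type) [Fintype V] [DecidableEq V] (G : SimpleGraph V),
    Fintype.card V = k + 1 → ∑ v, dg G v = 2 * (k : ℝ) →
    (ff G ≤ Nat.fib (2 * k + 2) ∧ (ff G = Nat.fib (2 * k + 2) → ∃ l, HP G l)) ∧
    (G.Connected → ∀ u, hh G u ≤ Nat.fib (2 * k + 1) ∧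
      (hh G u = Nat.fib (2 * k + 1) → ∃ t, HP G (u :: t))) := by
  induction k using Nat.strong_induction_on with
  | _ k ih =>
  intro V _ _ G hcard hsum
  classical
  have hV : Nonempty V := Fintype.card_pos_iff.1 (by omega)
  rcases Nat.eq_zero_or_pos k with rfl | hk
  · have : Subsingleton V := Fintype.card_le_one_iff_subsingleton.1 (by omega)
    have hp : ∀ v, HP G [v] := by
      intro v
      refine ⟨by simp, fun x => by simp [Subsingleton.elim x v], fun a b => ?_⟩
      rw [Subsingleton.elim b a]; simp
    refine ⟨⟨?_, fun _ => ⟨_, hp hV.some⟩⟩, fun _ u => ⟨?_, fun _ => ⟨_, hp u⟩⟩⟩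
    · rw [(sub_single G hV.some).1]; simp
    · rw [(sub_single G u).2]; simp
  -- arithmetic of Fibonacci numbers
  obtain ⟨j, rfl⟩ : ∃ j, k = j + 1 := ⟨k - 1, by omega⟩
  have F1 : (Nat.fib (2 * (j + 1) + 2) : ℝ) = 2 * Nat.fib (2 * j + 2) + Nat.fib (2 * j + 1) := by
    have a1 : Nat.fib (2 * (j + 1) + 2) = Nat.fib (2 * j + 2) + Nat.fib (2 * j + 3) := Nat.fib_add_two
    have a2 : Nat.fib (2 * j + 3) = Nat.fib (2 * j + 1) + Nat.fib (2 * j + 2) := Nat.fib_add_two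
    rw [a1, a2]; push_cast; ring
  have F2 : (Nat.fib (2 * (j + 1) + 1) : ℝ) = Nat.fib (2 * j + 2) + Nat.fib (2 * j + 1) := by
    have a2 : Nat.fib (2 * (j + 1) + 1) = Nat.fib (2 * j + 1) + Nat.fib (2 * j + 2) := Nat.fib_add_two
    rw [a2]; push_cast; ring
  have F3 : (0 : ℝ) < Nat.fib (2 * j + 1) := by
    exact_mod_cast Nat.fib_pos.2 (by omega)
  push_cast at hsum
  by_cases hc : G.Connected
  · have hdpos : ∀ v, 1 ≤ dg G v := by
      intro v
      have : Nontrivial V := Fintype.one_lt_card_iff_nontrivial.1 (by omega)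
      obtain ⟨w, hw⟩ := hc.preconnected.exists_adj_of_nontrivial v
      exact one_le_dg G hw
    -- consequences of being a leaf
    have hleaf : ∀ u, dg G u = 1 →
        (ff G ≤ Nat.fib (2 * (j + 1) + 2) ∧ (ff G = Nat.fib (2 * (j + 1) + 2) → ∃ t, HP G (u :: t))) ∧
        (hh G u ≤ Nat.fib (2 * (j + 1) + 1) ∧
          (hh G u = Nat.fib (2 * (j + 1) + 1) → ∃ t, HP G (u :: t))) := by
      intro u hu
      obtain ⟨w, hw, hc'⟩ := leaf_data G hc u hu
      have hr : ∀ v, v ≠ u ↔ v ∈ Set.range (Subtype.val : {x // x ≠ u} → V) := by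
        intro v; simp
      have hf : Function.Injective (Subtype.val : {x // x ≠ u} → V) := Subtype.val_injective
      obtain ⟨hs, hcd⟩ := leaf_sum G _ hf u hr w hw
      have e1 := leaf_ff G _ hf u hr w hw
      have e2 := leaf_hh G _ hf u hr w hw
      obtain ⟨⟨i1, -⟩, i2⟩ := ih j (by omega) _ (G.comap (Subtype.val : {x // x ≠ u} → V))
        (by omega) (by linarith)
      obtain ⟨i3, i4⟩ := i2 hc' w
      have hpath : hh (G.comap (Subtype.val : {x // x ≠ u} → V)) w = Nat.fib (2 * j + 1) →
          ∃ t, HP G (u :: t) := by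
        intro h
        obtain ⟨t, ht⟩ := i4 h
        exact ⟨_, HP_cons G _ hf u hr w hw t ht⟩
      refine ⟨⟨by linarith, fun h => hpath (by linarith)⟩, ⟨by linarith, fun h => hpath (by linarith)⟩⟩
    have hA : ff G ≤ Nat.fib (2 * (j + 1) + 2) ∧
        (ff G = Nat.fib (2 * (j + 1) + 2) → ∃ l, HP G l) := by
      obtain ⟨u, hu⟩ : ∃ u, dg G u = 1 := by
        by_contra! hne
        have h2 : ∀ v, 2 ≤ dg G v := by
          intro v
          have a1 := hdpos v
          have a2 := hne v
          obtain ⟨d, hd⟩ := dg_nat G v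
          rw [hd] at a1 a2 ⊢
          norm_cast at a1 a2 ⊢
          omega
        have := Finset.sum_le_sum fun v (_ : v ∈ Finset.univ) => h2 v
        rw [hsum] at this
        simp only [Finset.sum_const, Finset.card_univ, hcard, nsmul_eq_mul] at this
        push_cast at this
        linarith
      obtain ⟨h1, h2⟩ := (hleaf u hu).1
      exact ⟨h1, fun h => ⟨_, (h2 h).choose_spec⟩⟩
    refine ⟨hA, fun _ u => ?_⟩
    by_cases hu : dg G u = 1
    · exact (hleaf u hu).2
    · have h2 : 2 ≤ dg G u := by
        have a1 := hdpos u
        obtain ⟨d, hd⟩ := dg_nat G u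
        rw [hd] at a1 hu ⊢
        norm_cast at a1 hu ⊢
        omega
      have h3 := K_le G u
      have h4 := K_pos G u
      have h5 : (MX G)⁻¹ u u ≤ 1 / 2 := by nlinarith
      have h6 : hh G u ≤ ff G / 2 := by
        rw [hh]; nlinarith [ff_pos G]
      have h7 : hh G u < Nat.fib (2 * (j + 1) + 1) := by linarith [hA.1]
      exact ⟨h7.le, fun h => absurd h h7.ne⟩
  · refine ⟨?_, fun h => absurd h hc⟩
    suffices hlt : ff G < Nat.fib (2 * (j + 1) + 2) from ⟨hlt.le, fun h => absurd h hlt.ne⟩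
    obtain ⟨C, hC⟩ := exists_component G (by rw [hsum, hcard]; push_cast; linarith)
    let p : V → Prop := fun v => v ∈ C.supp
    have hp : ∀ a b, G.Adj a b → (p a ↔ p b) := fun a b h => C.mem_supp_congr_adj h
    have hp' : ∀ a b, G.Adj a b → (¬ p a ↔ ¬ p b) := fun a b h => not_congr (hp a b h)
    have hCc : (G.comap (Subtype.val : {x // p x} → V)).Connected := C.connected_toSimpleGraph
    have d1 := dg_comap_val G p hp
    have d2 := dg_comap_val G (fun x => ¬ p x) hp'
    have hsplit : ∑ v, dg G v = ∑ x : {x // p x}, dg G x.1 + ∑ x : {x // ¬ p x}, dg G x.1 :=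
      (Fintype.sum_subtype_add_sum_subtype p _).symm
    have hcs : Fintype.card V = Fintype.card {x // p x} + Fintype.card {x // ¬ p x} := by
      rw [← Fintype.card_sum]
      exact (Fintype.card_congr (Equiv.sumCompl p)).symm
    have hA1 : ∑ x : {x // p x}, dg (G.comap (Subtype.val : {x // p x} → V)) x =
        ∑ x : {x // p x}, dg G x.1 := Finset.sum_congr rfl fun x _ => d1 x
    have hB1 : ∑ x : {x // ¬ p x}, dg (G.comap (Subtype.val : {x // ¬ p x} → V)) x =
        ∑ x : {x // ¬ p x}, dg G x.1 := Finset.sum_congr rfl fun x _ => d2 x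
    have hm := sum_dg (G.comap (Subtype.val : {x // p x} → V))
    have hcc := conn_card _ hCc
    have hC' : ∑ x : {x // p x}, dg G x.1 < 2 * (Fintype.card {x // p x} : ℝ) := by
      rw [Nat.card_eq_fintype_card] at hC
      convert hC
    rw [hA1] at hm
    generalize Nat.card (G.comap (Subtype.val : {x // p x} → V)).edgeSet = m at hm hcc
    have hAn : Fintype.card {x // p x} = m + 1 := by
      have h1 : (m : ℝ) < Fintype.card {x // p x} := by linarith
      have h2 : m < Fintype.card {x // p x} := by exact_mod_cast h1
      have h3 : Fintype.card {x // p x} ≤ m + 1 := by exact_mod_cast hcc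
      omega
    have hBne : Nonempty {x // ¬ p x} := by
      by_contra hemp
      apply hc
      have hall : ∀ x, p x := by
        intro x
        by_contra hx
        exact hemp ⟨⟨x, hx⟩⟩
      exact ⟨fun a b => C.reachable_of_mem_supp (hall a) (hall b)⟩
    have hBpos : 0 < Fintype.card {x // ¬ p x} := Fintype.card_pos
    obtain ⟨b, hb⟩ : ∃ b, Fintype.card {x // ¬ p x} = b + 1 :=
      ⟨Fintype.card {x // ¬ p x} - 1, by omega⟩
    have hj : j + 1 = m + b + 1 := by omega
    have hjR : (j : ℝ) = m + b := by
      have : j = m + b := by omega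
      rw [this]; push_cast; ring
    have hB2 : ∑ x : {x // ¬ p x}, dg (G.comap (Subtype.val : {x // ¬ p x} → V)) x =
        2 * (Fintype.card {x // ¬ p x} : ℝ) := by
      rw [hB1, hb]; push_cast; linarith
    obtain ⟨u, v, huv, hle⟩ := unicyc _ hB2
    have hB3 : ∑ x, dg ((G.comap (Subtype.val : {x // ¬ p x} → V)).deleteEdges {s(u, v)}) x =
        2 * (b : ℝ) := by
      have : ∑ x : {x // ¬ p x}, dg (G.comap (Subtype.val : {x // ¬ p x} → V)) x =
          ∑ x, dg ((G.comap (Subtype.val : {x // ¬ p x} → V)).deleteEdges {s(u, v)}) x + 2 := by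
        rw [Finset.sum_congr rfl fun x _ => dg_del _ huv x]
        simp only [Finset.sum_add_distrib]
        simp
        norm_num
      rw [hB2, hb] at this; push_cast at this; linarith
    have iA := (ih m (by omega) _ _ hAn (by rw [hA1]; exact hm)).1.1
    have iB := (ih b (by omega) _ _ hb hB3).1.1
    rw [ff_split G p hp]
    have key := fib_mul_lt (m + 1) (b + 1) (by omega) (by omega)
    have e : 2 * (j + 1) + 2 = 2 * (m + 1 + (b + 1)) := by omega
    rw [e]
    refine lt_of_le_of_lt ?_ key
    have s0 : 0 ≤ √5 := Real.sqrt_nonneg 5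
    calc _ ≤ (Nat.fib (2 * (m + 1)) : ℝ) * (√5 * Nat.fib (2 * (b + 1))) :=
          mul_le_mul iA (hle.trans (mul_le_mul_of_nonneg_left iB s0)) (ff_pos _).le (by positivity)
      _ = _ := by ring
def pathG (n : ℕ) : SimpleGraph (Fin n) where
  Adj i j := (i : ℕ) + 1 = j ∨ (j : ℕ) + 1 = i
  symm := ⟨fun _ _ h => h.symm⟩
  loopless := ⟨fun i h => by rcases h with h | h <;> omega⟩

lemma pathG_comap (n : ℕ) : (pathG (n + 1)).comap Fin.succ = pathG n := by
  ext a b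
  simp [pathG, Fin.val_succ]

lemma pathG_ff (k : ℕ) : ff (pathG (k + 1)) = Nat.fib (2 * k + 2) ∧
    hh (pathG (k + 1)) 0 = Nat.fib (2 * k + 1) := by
  induction k with
  | zero =>
    have := sub_single (pathG 1) 0
    simpa using this
  | succ k ih =>
    have hr : ∀ v : Fin (k + 2), v ≠ 0 ↔ v ∈ Set.range (Fin.succ : Fin (k + 1) → Fin (k + 2)) := by
      intro v; simp [Fin.range_succ]
    have hw : ∀ v : Fin (k + 2), (pathG (k + 2)).Adj 0 v ↔ v = Fin.succ (0 : Fin (k + 1)) := by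
      intro v
      simp only [pathG, Fin.ext_iff, Fin.val_zero, Fin.val_succ]
      omega
    have e1 := leaf_ff (pathG (k + 2)) Fin.succ (Fin.succ_injective _) 0 hr 0 hw
    have e2 := leaf_hh (pathG (k + 2)) Fin.succ (Fin.succ_injective _) 0 hr 0 hw
    rw [pathG_comap, ih.1, ih.2] at e1 e2
    have a1 : Nat.fib (2 * (k + 1) + 2) = Nat.fib (2 * k + 2) + Nat.fib (2 * k + 3) := Nat.fib_add_two
    have a2 : Nat.fib (2 * k + 3) = Nat.fib (2 * k + 1) + Nat.fib (2 * k + 2) := Nat.fib_add_two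
    have a3 : Nat.fib (2 * (k + 1) + 1) = Nat.fib (2 * k + 1) + Nat.fib (2 * k + 2) := Nat.fib_add_two
    rw [e1, e2, a1, a3, a2]
    push_cast
    constructor <;> ring

lemma nst_eq {n : ℕ} (W : Fin (n + 1) → Fin (n + 1) → ℝ) (G : SimpleGraph (Fin n))
    (h1 : ∀ i j : Fin n, W i.castSucc j.castSucc = aj G i j)
    (h2 : ∀ i : Fin n, W i.castSucc (Fin.last n) = 1) : nst W = ff G := by
  rw [nst, ff]
  congr 1
  ext i j
  simp only [Matrix.submatrix_apply, lapG, MX, Fin.castSucc_inj]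
  by_cases h : i = j
  · subst h
    simp [Fin.sum_univ_castSucc, h1, h2, dg, aj_self, add_comm]
  · simp [h, h1]

lemma nst_fan_s11 (n : ℕ) : nst (fanW n) = ff (pathG n) := by
  apply nst_eq
  · intro i j
    have hi : i.castSucc ≠ Fin.last n := Fin.castSucc_ne_last i
    have hj : j.castSucc ≠ Fin.last n := Fin.castSucc_ne_last j
    by_cases h : (pathG n).Adj i j
    · rw [aj_of _ h]
      have h' : (i : ℕ) + 1 = j ∨ (j : ℕ) + 1 = i := h
      simp [fanW, starW, hi, hj, h']
    · rw [aj_not _ h]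
      have h' : ¬ ((i : ℕ) + 1 = j ∨ (j : ℕ) + 1 = i) := h
      simp [fanW, starW, hi, hj, h']
  · intro i
    have hi : i.castSucc ≠ Fin.last n := Fin.castSucc_ne_last i
    have hi2 : ¬ (n + 1 = (i : ℕ)) := by omega
    simp [fanW, starW, hi, hi2]

lemma nst_star (n : ℕ) (P : Finset (Sym2 (Fin n))) (hP : ∀ e ∈ P, ¬ e.IsDiag) :
    nst (starPlusEdges n P) = ff (SimpleGraph.fromEdgeSet (P : Set (Sym2 (Fin n)))) := by
  have hadj : ∀ i j, (SimpleGraph.fromEdgeSet (P : Set (Sym2 (Fin n)))).Adj i j ↔ s(i, j) ∈ P := by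
    intro i j
    simp only [SimpleGraph.fromEdgeSet_adj, Finset.mem_coe, and_iff_left_iff_imp]
    rintro h rfl
    exact hP _ h (by simp)
  apply nst_eq
  · intro i j
    have hi : i.castSucc ≠ Fin.last n := Fin.castSucc_ne_last i
    have hj : j.castSucc ≠ Fin.last n := Fin.castSucc_ne_last j
    have hs : starW n i.castSucc j.castSucc = 0 := by simp [starW, hi, hj]
    have he : (∃ a b : Fin n, i.castSucc = a.castSucc ∧ j.castSucc = b.castSucc ∧ s(a, b) ∈ P) ↔
        s(i, j) ∈ P := by
      constructor
      · rintro ⟨a, b, ha, hb, h⟩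
        rwa [Fin.castSucc_injective n ha, Fin.castSucc_injective n hb]
      · intro h; exact ⟨i, j, rfl, rfl, h⟩
    unfold starPlusEdges
    rw [hs, zero_add]
    by_cases h : s(i, j) ∈ P
    · rw [aj_of _ ((hadj i j).2 h), if_pos (he.2 h)]
    · rw [aj_not _ (fun h' => h ((hadj i j).1 h')), if_neg (fun h' => h (he.1 h'))]
  · intro i
    have hi : i.castSucc ≠ Fin.last n := Fin.castSucc_ne_last i
    have hs : starW n i.castSucc (Fin.last n) = 1 := by simp [starW, hi]
    unfold starPlusEdges
    rw [hs, if_neg, add_zero]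
    rintro ⟨a, b, -, hb, -⟩
    exact Fin.castSucc_ne_last b hb.symm

theorem stmt11 (n : ℕ) (hn : 2 ≤ n) (E' : Finset (Sym2 (Fin n)))
    (hE' : ∀ e ∈ E', ¬ e.IsDiag)
    (P : Finset (Sym2 (Fin n))) (hPE : P ⊆ E') (hcard : P.card = n - 1)
    (hnotham : ¬ IsHamPathEdges n P) :
    nst (starPlusEdges n P) < nst (fanW n) := by
  have hP : ∀ e ∈ P, ¬ e.IsDiag := fun e he => hE' e (hPE he)
  obtain ⟨k, rfl⟩ : ∃ k, n = k + 1 := ⟨n - 1, by omega⟩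
  rw [nst_fan_s11, nst_star _ P hP, (pathG_ff k).1]
  set G := SimpleGraph.fromEdgeSet (P : Set (Sym2 (Fin (k + 1)))) with hG
  have hes : G.edgeSet = (P : Set (Sym2 (Fin (k + 1)))) := by
    rw [hG, SimpleGraph.edgeSet_fromEdgeSet]
    ext e
    constructor
    · exact fun h => h.1
    · exact fun h => ⟨h, hP e h⟩
  have hsum : ∑ v, dg G v = 2 * (k : ℝ) := by
    rw [sum_dg, hes]
    simp [hcard]
  obtain ⟨⟨hle, heq⟩, -⟩ := main_ind k _ G (by simp) hsum
  refine lt_of_le_of_ne hle fun h => hnotham ?_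
  obtain ⟨l, hl1, hl2, hl3⟩ := heq h
  refine ⟨l, hl1, hl2, fun e => ?_⟩
  rw [← Finset.mem_coe, ← hes]
  induction e using Sym2.ind with
  | _ a b =>
    rw [SimpleGraph.mem_edgeSet, hl3]
    constructor
    · rintro (h | h)
      · exact ⟨_, h, rfl⟩
      · exact ⟨_, h, Sym2.eq_swap⟩
    · rintro ⟨⟨c, d⟩, h, he⟩
      rcases Sym2.eq_iff.1 he with ⟨rfl, rfl⟩ | ⟨rfl, rfl⟩
      · exact Or.inl h
      · exact Or.inr h
end
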